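/- arXiv:1707.02384 — 2 statements merged into one kernel-verified Lean document; each statement's English description precedes it below -/
import Mathlib

section
/- Let q ≥ 10 be an integer, let T be a tournament, and let Ω be a collection of pairwise vertex-disjoint q-cycles of T such that the subtournament T ∖ Ω contains no q-cycle. Let P = (u_l, …, u₂, u₁) be a Hamiltonian path of T ∖ Ω (so (u_{i+1}, u_i) is an arc for each i) with l ≥ 4q − 5, and set U₁ = {u₁, …, u_{q+1}} and U₂ = {u_{4q−4}, …, u_l}. If some cycle C ∈ Ω admits a (q − 1)-matching from U₁ to C and a 3-matching from C to U₂, then T contains |Ω| + 1 pairwise vertex-disjoint q-cycles. -/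
open Set

/-- `T` is a tournament: irreflexive, and for distinct vertices exactly one
of the two possible arcs is present. -/
def IsTournament {V : Type*} (T : V → V → Prop) : Prop :=
  (∀ x, ¬ T x x) ∧ ∀ x y, x ≠ y → (T x y ↔ ¬ T y x)

/-- `c` is a directed cycle of length `q` in the digraph `T`. -/
def IsCycle {V : Type*} (T : V → V → Prop) (q : ℕ) (c : ZMod q → V) : Prop :=
  Function.Injective c ∧ ∀ i, T (c i) (c (i + 1))

/-- The cycles in the family `C` are pairwise vertex-disjoint. -/
def DisjointCycles {V : Type*} {k q : ℕ} (C : Fin k → ZMod q → V) : Prop :=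
  ∀ j j' : Fin k, j ≠ j' → Disjoint (Set.range (C j)) (Set.range (C j'))

/-- `T` contains `k` pairwise vertex-disjoint directed cycles of length `q`. -/
def HasDisjointCycles {V : Type*} (T : V → V → Prop) (k q : ℕ) : Prop :=
  ∃ C : Fin k → ZMod q → V, (∀ j, IsCycle T q (C j)) ∧ DisjointCycles C

/-- The out-degree of a vertex `v`. -/
noncomputable def outDeg {V : Type*} (T : V → V → Prop) (v : V) : ℕ :=
  {w | T v w}.ncard

/-- `d⁺(v, Y)`: the number of out-neighbours of `v` inside the set `Y`. -/
noncomputable def outDegTo {V : Type*} (T : V → V → Prop) (v : V) (Y : Set V) : ℕ :=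
  {w ∈ Y | T v w}.ncard

/-- `d⁺(X, v)`: the number of in-neighbours of `v` inside the set `X`. -/
noncomputable def inDegFrom {V : Type*} (T : V → V → Prop) (X : Set V) (v : V) : ℕ :=
  {x ∈ X | T x v}.ncard

/-- `d⁺(X, Y)`: the number of arcs from `X` to `Y`. -/
noncomputable def arcs {V : Type*} (T : V → V → Prop) (X Y : Set V) : ℕ :=
  {p : V × V | p.1 ∈ X ∧ p.2 ∈ Y ∧ T p.1 p.2}.ncard

/-- There is an `r`-matching from `X` to `Y`: `r` arcs from `X` to `Y` that
pairwise share no endpoints. -/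
def HasMatching {V : Type*} (T : V → V → Prop) (X Y : Set V) (r : ℕ) : Prop :=
  ∃ e : Fin r → V × V,
    (∀ i, (e i).1 ∈ X ∧ (e i).2 ∈ Y ∧ T (e i).1 (e i).2) ∧
    ∀ i j, i ≠ j → (e i).1 ≠ (e j).1 ∧ (e i).2 ≠ (e j).2

/-- `u` is a Hamiltonian path of the subtournament induced on `S`, written as
`P = (u_{l} … u₂ u₁)`: the vertex `u ⟨0,_⟩` is `u₁`, and each arc goes from the
higher-indexed vertex to the next lower-indexed one. -/
def IsHamPathOn {V : Type*} (T : V → V → Prop) (S : Set V) {l : ℕ}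
    (u : Fin l → V) : Prop :=
  Function.Injective u ∧ Set.range u = S ∧
    ∀ (i : ℕ) (h : i + 1 < l), T (u ⟨i + 1, h⟩) (u ⟨i, Nat.lt_of_succ_lt h⟩)

/-!
By Moon's theorem a strong tournament has cycles of all lengths, so every arc of `P` between
indices at least `q - 1` apart points from the larger index to the smaller one: otherwise it would
close a stretch of `P` to a cycle of length at least `q`, and `T ∖ Ω` would contain a `q`-cycle.

All vertices of `C` but at most one receive a matching arc from `U₁`, so two of the three vertices
of `C` that start an arc to `U₂` also receive one from `U₁`. Cutting `C` behind these two vertices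
and dropping at most two vertices at the front gives two disjoint segments, each entered from `U₁`
at its first vertex and left towards `U₂` at its last one, with at least `q - 2` vertices in total.
Each segment closes up through its vertex of `U₂`, a stretch from the middle of `P`, and its vertex
of `U₁`. Choosing the two stretches disjoint and of the right lengths yields two disjoint
`q`-cycles that replace `C`. The stretches need at most `2 * q - (q - 2) - 4 = q - 2` vertices,
which is the number of indices at distance at least `q - 1` from both `U₁` and `U₂`.
-/

section

variable {V : Type*} {T : V → V → Prop}

namespace IsTournament

lemma asymm (hT : IsTournament T) {x y : V} (h : T x y) : ¬T y x := by
  rcases eq_or_ne x y with rfl | hxy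
  · exact hT.1 x
  · exact (hT.2 x y hxy).1 h

lemma arc_of_not_arc (hT : IsTournament T) {x y : V} (hxy : x ≠ y) (h : ¬T x y) : T y x :=
  not_not.1 fun h' => h ((hT.2 x y hxy).2 h')

end IsTournament

/-- The digraph induced by `T` on `S` is strongly connected. This is encoded by cuts: whenever `A`
splits `S` into two nonempty parts, some arc leaves `S ∩ A` inside `S`. -/
def IsStrongOn (T : V → V → Prop) (S : Set V) : Prop :=
  ∀ A : Set V, (S ∩ A).Nonempty → (S \ A).Nonempty → ∃ x ∈ S ∩ A, ∃ y ∈ S \ A, T x y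

/-- The subdigraph of `T` induced on `S` contains no `q`-cycle. -/
def IsCycleFreeOn (T : V → V → Prop) (q : ℕ) (S : Set V) : Prop :=
  ¬∃ c : ZMod q → V, IsCycle T q c ∧ Set.range c ⊆ S

/-- `c` is a directed cycle of `T`, presented as a list up to rotation. This is equivalent to
`IsCycle` for `c.length ≠ 0`, and lets cycles be built by concatenating paths. -/
structure IsDicycle (T : V → V → Prop) (c : Cycle V) : Prop where
  nodup : c.Nodup
  chain : c.Chain T

lemma exists_eq_coe_cons_of_mem {c : Cycle V} {x : V} (hx : x ∈ c) :
    ∃ l : List V, c = ↑(x :: l) := by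
  induction c with
  | nil => exact absurd hx (Cycle.notMem_nil x)
  | cons a l =>
    obtain ⟨s, t, hst⟩ := List.append_of_mem (Cycle.mem_coe_iff.1 hx)
    exact ⟨t ++ s, Cycle.coe_eq_coe.2 (hst ▸ List.isRotated_append)⟩

lemma exists_mem_of_length_pos {c : Cycle V} (hc : 0 < c.length) : ∃ x, x ∈ c := by
  induction c with
  | nil => exact absurd hc (lt_irrefl 0)
  | cons a l => exact ⟨a, List.mem_cons_self⟩

lemma exists_mem_notMem_of_length_lt_card {c : Cycle V} {S : Finset V} (hc : c.length < S.card) :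
    ∃ x ∈ S, x ∉ c := by
  classical
  induction c using Quotient.inductionOn with | h l
  obtain ⟨x, hxS, hxl⟩ := Finset.exists_mem_notMem_of_card_lt_card
    ((List.toFinset_card_le l).trans_lt hc)
  exact ⟨x, hxS, fun h => hxl (List.mem_toFinset.2 h)⟩

lemma isDicycle_coe {l : List V} (hnodup : l.Nodup) (hchain : l.IsChain T)
    (hclose : ∀ x ∈ l.getLast?, ∀ y ∈ l.head?, T x y) : IsDicycle T (l : Cycle V) := by
  refine ⟨hnodup, ?_⟩
  rcases l with _ | ⟨a, l⟩
  · exact Cycle.Chain.nil T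
  · exact hchain.append (List.isChain_singleton a) (by simpa using hclose)

namespace IsDicycle

lemma exists_isCycle {c : Cycle V} (hc : IsDicycle T c) {q : ℕ} [NeZero q] (hq : c.length = q) :
    ∃ d : ZMod q → V, IsCycle T q d ∧ Set.range d = {v | v ∈ c} := by
  induction c with
  | nil => exact absurd hq.symm (NeZero.ne q)
  | cons a l =>
    have hlen : (a :: l).length = q := hq
    have hlt (z : ZMod q) : z.val < (a :: l).length := z.val_lt.trans_eq hlen.symm
    have harc (i : ℕ) (hi : i < (a :: l).length) (hi' : (i + 1) % q < (a :: l).length) :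
        T (a :: l)[i] (a :: l)[(i + 1) % q] := by
      have hstep := List.IsChain.getElem hc.chain i (by simpa using hi)
      rcases Nat.lt_or_eq_of_le (Nat.succ_le_of_lt (hi.trans_eq hlen)) with h | h
      · have hmod : (i + 1) % q = i + 1 := Nat.mod_eq_of_lt h
        grind
      · have hmod : (i + 1) % q = 0 := h ▸ Nat.mod_self q
        grind
    refine ⟨fun z => (a :: l)[z.val]'(hlt z), ⟨fun z w hzw => ?_, fun z => ?_⟩, ?_⟩
    · exact ZMod.val_injective q ((List.Nodup.getElem_inj_iff hc.nodup).1 hzw)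
    · have hval : (z + 1).val = (z.val + 1) % q := by simp [ZMod.val_add, ZMod.val_one_eq_one_mod]
      simpa only [hval] using harc z.val (hlt z) (hval ▸ hlt (z + 1))
    · ext v
      refine ⟨?_, fun hv => ?_⟩
      · rintro ⟨z, rfl⟩
        exact List.getElem_mem (hlt z)
      · obtain ⟨i, hi, rfl⟩ := List.getElem_of_mem (Cycle.mem_coe_iff.1 hv)
        exact ⟨i, by simp only [ZMod.val_cast_of_lt (hi.trans_eq hlen)]⟩

lemma isStrongOn {c : Cycle V} (hc : IsDicycle T c) : IsStrongOn T {v | v ∈ c} := by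
  rintro A ⟨x, hx, hxA⟩ ⟨y, hy, hyA⟩
  by_contra! hno
  obtain ⟨l, rfl⟩ := exists_eq_coe_cons_of_mem hx
  have hchain : (x :: l).IsChain T := List.IsChain.left_of_append hc.chain
  refine hyA ((List.IsChain.iff_mem.1 hchain).induction (· ∈ A) (x :: l) ?_ (fun _ => hxA) y hy)
  rintro a b ⟨ha, hb, hab⟩ haA
  by_contra hbA
  exact hno a ⟨ha, haA⟩ b ⟨hb, hbA⟩ hab

end IsDicycle

lemma exists_isChain_insert {l : List V} {v x y e : V} (hl : (x :: (l ++ [e])).IsChain T)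
    (hxv : T x v) (hy : y ∈ l) (hvy : T v y) (hv : ∀ z ∈ l, ¬T v z → T z v) :
    ∃ l₁ l₂, l = l₁ ++ l₂ ∧ (x :: (l₁ ++ v :: (l₂ ++ [e]))).IsChain T := by
  induction l generalizing x with
  | nil => simp at hy
  | cons z l ih =>
    rw [List.cons_append, List.isChain_cons_cons] at hl
    by_cases hvz : T v z
    · exact ⟨[], z :: l, rfl, by simp [hxv, hvz, hl.2]⟩
    · have hyl : y ∈ l := (List.mem_cons.1 hy).resolve_left fun h => hvz (h ▸ hvy)
      obtain ⟨l₁, l₂, rfl, h⟩ := ih hl.2 (hv z List.mem_cons_self hvz) hyl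
        fun w hw => hv w (List.mem_cons_of_mem z hw)
      exact ⟨z :: l₁, l₂, rfl, List.IsChain.cons_cons hl.1 h⟩

namespace IsDicycle

lemma exists_insert (hT : IsTournament T) {c : Cycle V} (hc : IsDicycle T c) {v x y : V}
    (hv : v ∉ c) (hx : x ∈ c) (hxv : T x v) (hy : y ∈ c) (hvy : T v y) :
    ∃ c', IsDicycle T c' ∧ c'.length = c.length + 1 ∧ ∀ z ∈ c', z = v ∨ z ∈ c := by
  obtain ⟨l, rfl⟩ := exists_eq_coe_cons_of_mem hx
  have hyl : y ∈ l := (List.mem_cons.1 hy).resolve_left fun h => hT.asymm hxv (h ▸ hvy)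
  obtain ⟨l₁, l₂, rfl, hchain⟩ := exists_isChain_insert hc.chain hxv hyl hvy fun z hz hvz =>
    hT.arc_of_not_arc (fun h => hv (h ▸ List.mem_cons_of_mem x hz)) hvz
  have hperm : (x :: (l₁ ++ v :: l₂)).Perm (v :: x :: (l₁ ++ l₂)) :=
    (List.perm_middle.cons x).trans (List.Perm.swap v x _)
  refine ⟨↑(x :: (l₁ ++ v :: l₂)), ⟨?_, ?_⟩, hperm.length_eq, fun z hz => ?_⟩
  · exact hperm.nodup_iff.2 (List.nodup_cons.2 ⟨hv, hc.nodup⟩)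
  · simpa using hchain
  · exact List.mem_cons.1 (hperm.mem_iff.1 hz)

lemma exists_replace (hT : IsTournament T) {c : Cycle V} (hc : IsDicycle T c)
    (hlen : 2 ≤ c.length) {a b : V} (hb : ∀ x ∈ c, T x b) (hba : T b a) (ha : ∀ x ∈ c, T a x) :
    ∃ c', IsDicycle T c' ∧ c'.length = c.length + 1 ∧ ∀ z ∈ c', z = b ∨ z = a ∨ z ∈ c := by
  have hac : a ∉ c := fun h => hT.1 a (ha a h)
  have hbc : b ∉ c := fun h => hT.1 b (hb b h)
  have hab : b ≠ a := by rintro rfl; exact hT.1 b hba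
  induction c with
  | nil => simp at hlen
  | cons x l =>
    rcases l with _ | ⟨y, l⟩
    · simp at hlen
    have hmem : ∀ z ∈ y :: l, z ∈ ((x :: y :: l : List V) : Cycle V) :=
      fun z => List.mem_cons_of_mem x
    refine ⟨↑(b :: a :: y :: l), isDicycle_coe ?_ ?_ ?_, rfl, fun z hz => ?_⟩
    · have := hc.nodup
      simp_all
    · exact .cons_cons hba (.cons_cons (ha y (hmem y List.mem_cons_self))
        (List.IsChain.left_of_append hc.chain).tail)
    · rintro z hz w hw
      obtain rfl : b = w := by simpa using hw
      refine hb z (hmem z (List.mem_of_getLast? ?_))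
      simpa using hz
    · simp only [Cycle.mem_coe_iff, List.mem_cons] at hz ⊢
      tauto

end IsDicycle

lemma IsStrongOn.exists_triangle (hT : IsTournament T) {S : Set V} (hS : IsStrongOn T S)
    (hS' : S.Nontrivial) : ∃ c, IsDicycle T c ∧ c.length = 3 ∧ ∀ v ∈ c, v ∈ S := by
  obtain ⟨x, hx, x', hx', hne⟩ := hS'
  obtain ⟨x₁, ⟨-, hx₁⟩, y, ⟨hy, -⟩, hxy⟩ := hS {x} ⟨x, hx, rfl⟩ ⟨x', hx', hne.symm⟩
  rw [Set.mem_singleton_iff.1 hx₁] at hxy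
  obtain ⟨a, ⟨ha, hxa⟩, b, ⟨hb, hxb⟩, hab⟩ := hS {z | T x z} ⟨y, hy, hxy⟩ ⟨x, hx, hT.1 x⟩
  have hxab : x ≠ b := by rintro rfl; exact hT.asymm hxa hab
  have hbx : T b x := hT.arc_of_not_arc hxab hxb
  have hxa' : x ≠ a := by rintro rfl; exact hT.1 x hxa
  have hab' : a ≠ b := by rintro rfl; exact hT.1 a hab
  refine ⟨↑[x, a, b], isDicycle_coe ?_ ?_ ?_, rfl, ?_⟩
  · simp [*]
  · simpa [hab] using hxa
  · simpa using hbx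
  · simp [hx, ha, hb]

lemma IsStrongOn.exists_isDicycle_length_succ (hT : IsTournament T) {S : Finset V}
    (hS : IsStrongOn T S) {c : Cycle V} (hc : IsDicycle T c) (hcS : ∀ v ∈ c, v ∈ S)
    (hlen : 2 ≤ c.length) (hlt : c.length < S.card) :
    ∃ c', IsDicycle T c' ∧ c'.length = c.length + 1 ∧ ∀ v ∈ c', v ∈ S := by
  by_cases hmixed : ∃ v ∈ S, v ∉ c ∧ (∃ x ∈ c, T x v) ∧ ∃ y ∈ c, T v y
  · obtain ⟨v, hvS, hvc, ⟨x, hx, hxv⟩, y, hy, hvy⟩ := hmixed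
    obtain ⟨c', hc', hlen', hmem⟩ := hc.exists_insert hT hvc hx hxv hy hvy
    exact ⟨c', hc', hlen', fun z hz => (hmem z hz).elim (fun h => h ▸ hvS) (hcS z)⟩
  push Not at hmixed
  have hdom {v : V} (hvS : v ∈ S) (hvc : v ∉ c) (hv : ∃ x ∈ c, T x v) : ∀ y ∈ c, T y v :=
    fun y hy => hT.arc_of_not_arc (by rintro rfl; exact hvc hy) (hmixed v hvS hvc hv y hy)
  obtain ⟨x₀, hx₀⟩ : ∃ x, x ∈ c := exists_mem_of_length_pos (by omega)
  obtain ⟨y₀, hy₀⟩ : ∃ y ∈ S, y ∉ c := exists_mem_notMem_of_length_lt_card hlt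
  obtain ⟨x, ⟨-, hx⟩, y, ⟨hyS, hyc⟩, hxy⟩ := hS {v | v ∈ c} ⟨x₀, hcS x₀ hx₀, hx₀⟩ ⟨y₀, hy₀⟩
  obtain ⟨b, ⟨hbS, hb⟩, a, ⟨haS, ha⟩, hba⟩ := hS {v | ∀ x ∈ c, T x v}
    ⟨y, hyS, hdom hyS hyc ⟨x, hx, hxy⟩⟩ ⟨x, hcS x hx, fun h => hT.1 x (h x hx)⟩
  have hac : a ∉ c := fun h => hT.asymm hba (hb a h)
  have hac' : ∀ z ∈ c, T a z := fun z hz => hT.arc_of_not_arc (by rintro rfl; exact hac hz)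
    fun hza => ha (hdom haS hac ⟨z, hz, hza⟩)
  obtain ⟨c', hc', hlen', hmem⟩ := hc.exists_replace hT hlen hb hba hac'
  refine ⟨c', hc', hlen', fun z hz => ?_⟩
  rcases hmem z hz with rfl | rfl | hz
  exacts [hbS, haS, hcS z hz]

theorem IsStrongOn.exists_isDicycle_length_eq (hT : IsTournament T) {S : Finset V}
    (hS : IsStrongOn T S) {k : ℕ} (hk : 3 ≤ k) (hkS : k ≤ S.card) :
    ∃ c, IsDicycle T c ∧ c.length = k ∧ ∀ v ∈ c, v ∈ S := by
  induction k, hk using Nat.le_induction with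
  | base => exact hS.exists_triangle hT (Finset.one_lt_card_iff_nontrivial.1 (by omega))
  | succ k hk ih =>
    obtain ⟨c, hc, rfl, hcS⟩ := ih (by omega)
    exact hS.exists_isDicycle_length_succ hT hc hcS (by omega) (by omega)

lemma IsDicycle.exists_isDicycle_length_eq (hT : IsTournament T) {c : Cycle V}
    (hc : IsDicycle T c) {k : ℕ} (hk : 3 ≤ k) (hkc : k ≤ c.length) :
    ∃ c', IsDicycle T c' ∧ c'.length = k ∧ ∀ v ∈ c', v ∈ c := by
  classical
  induction c using Quotient.inductionOn with | h l
  have hstrong : IsStrongOn T (l.toFinset : Set V) := by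
    simpa using hc.isStrongOn
  obtain ⟨c', hc', hlen, hmem⟩ := hstrong.exists_isDicycle_length_eq hT hk
    (hkc.trans_eq (List.toFinset_card_of_nodup hc.nodup).symm)
  exact ⟨c', hc', hlen, fun v hv => List.mem_toFinset.1 (hmem v hv)⟩

lemma isChain_map_range' {R : V → V → Prop} {f : ℕ → V} {s k : ℕ}
    (hf : ∀ i, s ≤ i → i + 1 < s + k → R (f i) (f (i + 1))) :
    ((List.range' s k).map f).IsChain R := by
  refine List.isChain_iff_getElem.2 fun i hi => ?_
  have hi' : i + 1 < k := by simpa using hi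
  simpa [← add_assoc] using hf (s + i) (by omega) (by omega)

/-- `U 0, …, U (l - 1)` is a path of `T` listed against its direction, as in `IsHamPathOn`. The
indices are natural numbers to keep index arithmetic free of bounds; the values of `U` from `l` on
are irrelevant. -/
structure IsReversePath (T : V → V → Prop) (l : ℕ) (U : ℕ → V) : Prop where
  injOn : Set.InjOn U (Set.Iio l)
  arc : ∀ i, i + 1 < l → T (U (i + 1)) (U i)

lemma IsHamPathOn.exists_isReversePath [Nonempty V] {S : Set V} {l : ℕ} {u : Fin l → V}
    (hu : IsHamPathOn T S u) :
    ∃ U : ℕ → V, IsReversePath T l U ∧ (∀ i : Fin l, U i = u i) ∧ U '' Set.Iio l = S := by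
  obtain ⟨hinj, hrange, harc⟩ := hu
  have hU (i : Fin l) : Function.extend Fin.val u (fun _ => Classical.arbitrary V) i = u i :=
    Fin.val_injective.extend_apply u _ i
  refine ⟨Function.extend Fin.val u fun _ => Classical.arbitrary V, ⟨?_, ?_⟩, hU, ?_⟩
  · intro i hi j hj hij
    have := hinj ((hU ⟨i, hi⟩).symm.trans (hij.trans (hU ⟨j, hj⟩)))
    exact congrArg Fin.val this
  · intro i hi
    rw [hU ⟨i + 1, hi⟩, hU ⟨i, Nat.lt_of_succ_lt hi⟩]
    exact harc i hi
  · rw [← hrange, ← Fin.range_val, ← Set.range_comp]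
    exact congrArg Set.range (funext hU)

lemma IsReversePath.arc_of_add_le (hT : IsTournament T) {q l : ℕ} (hq : 3 ≤ q) {U : ℕ → V}
    (hU : IsReversePath T l U) (hfree : IsCycleFreeOn T q (U '' Set.Iio l)) {i j : ℕ} (hi : i < l)
    (hij : j + (q - 1) ≤ i) : T (U i) (U j) := by
  by_contra hno
  have hback : T (U j) (U i) :=
    hT.arc_of_not_arc (fun h => by have := hU.injOn hi (by grind) h; omega) hno
  have hc : IsDicycle T (((List.range' j (i + 1 - j)).map U).reverse : List V) := by
    refine isDicycle_coe (List.nodup_reverse.2 ?_) (List.isChain_reverse.2 ?_) ?_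
    · refine List.Nodup.map_on (fun a ha b hb => hU.injOn ?_ ?_) List.nodup_range' <;> grind
    · exact isChain_map_range' fun k _ hk => hU.arc k (by omega)
    · simpa [List.head?_range', List.getLast?_range', show ¬i + 1 - j = 0 by omega,
        show j + (i + 1 - j) - 1 = i by omega] using hback
  obtain ⟨c, hc, hlen, hmem⟩ := hc.exists_isDicycle_length_eq hT hq (by simp; omega)
  have : NeZero q := ⟨by omega⟩
  obtain ⟨d, hd, hrange⟩ := hc.exists_isCycle hlen
  refine hfree ⟨d, hd, hrange.trans_subset fun v hv => ?_⟩
  obtain ⟨k, hk, rfl⟩ : ∃ k ∈ List.range' j (i + 1 - j), U k = v := by simpa using hmem v hv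
  exact ⟨k, by grind, rfl⟩

lemma IsReversePath.isChain_detour {q l : ℕ} {U : ℕ → V} (hU : IsReversePath T l U)
    (hlong : ∀ i j, i < l → j + (q - 1) ≤ i → T (U i) (U j)) {lo m a b : ℕ} (hq : 2 ≤ q)
    (hb : b + (q - 1) ≤ lo) (ha : lo + m + q ≤ a + 2) (hal : a < l) :
    (U a :: (((List.range' lo m).map U).reverse ++ [U b])).IsChain T := by
  refine List.isChain_cons.2 ⟨?_, (List.isChain_reverse.2 ?_).append (List.isChain_singleton _) ?_⟩
  · rcases m with _ | m
    · simpa using hlong a b hal (by omega)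
    · simpa [List.getLast?_range'] using hlong a _ hal (by omega)
  · exact isChain_map_range' fun i _ hi => hU.arc i (by omega)
  · simpa +contextual [List.head?_range'] using fun _ => hlong lo b (by omega) hb

lemma exists_isCycle_detour {q l : ℕ} {f U : ℕ → V} {α k lo m a b : ℕ}
    (hf : Set.InjOn f (Set.Icc α (α + k)))
    (hfarc : ∀ t, α ≤ t → t < α + k → T (f t) (f (t + 1)))
    (hU : IsReversePath T l U) (hlong : ∀ i j, i < l → j + (q - 1) ≤ i → T (U i) (U j))
    (hfU : Disjoint (f '' Set.Icc α (α + k)) (U '' Set.Iio l)) (hlen : k + m + 3 = q)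
    (hb : b + (q - 1) ≤ lo) (ha : lo + m + q ≤ a + 2) (hal : a < l)
    (hfa : T (f (α + k)) (U a)) (hbf : T (U b) (f α)) :
    ∃ c : ZMod q → V, IsCycle T q c ∧ Set.range c =
      f '' Set.Icc α (α + k) ∪ U '' insert a (insert b (Set.Ico lo (lo + m))) := by
  have hlt : ∀ i ∈ a :: b :: List.range' lo m, i < l := by
    simp only [List.mem_cons, List.mem_range'_1]
    omega
  have hnodup : (a :: b :: List.range' lo m).Nodup := by
    refine List.nodup_cons.2 ⟨?_, List.nodup_cons.2 ⟨?_, List.nodup_range'⟩⟩ <;>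
      simp only [List.mem_cons, List.mem_range'_1] <;> omega
  have hperm : ((List.range' α (k + 1)).map f ++
      (U a :: (((List.range' lo m).map U).reverse ++ [U b]))).Perm
      ((List.range' α (k + 1)).map f ++ (a :: b :: List.range' lo m).map U) :=
    .append_left _ (.cons _ (List.perm_append_comm.trans (.cons _ (List.reverse_perm _))))
  have hc : IsDicycle T (((List.range' α (k + 1)).map f ++
      (U a :: (((List.range' lo m).map U).reverse ++ [U b])) : List V) : Cycle V) := by
    refine isDicycle_coe (hperm.nodup_iff.2 (List.nodup_append.2 ⟨?_, ?_, ?_⟩)) ?_ ?_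
    · refine List.Nodup.map_on (fun s hs t ht => hf ?_ ?_) List.nodup_range' <;> grind
    · exact List.Nodup.map_on (fun s hs t ht => hU.injOn (hlt s hs) (hlt t ht)) hnodup
    · simp only [List.mem_map]
      rintro _ ⟨t, ht, rfl⟩ _ ⟨i, hi, rfl⟩
      exact hfU.ne_of_mem ⟨t, by grind, rfl⟩ ⟨i, hlt i hi, rfl⟩
    · refine (isChain_map_range' fun t ht ht' => hfarc t ht (by omega)).append
        (hU.isChain_detour hlong (by omega) hb ha hal) ?_
      simpa [List.getLast?_range'] using hfa
    · simpa [List.head?_range', List.getLast?_cons] using hbf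
  have : NeZero q := ⟨by omega⟩
  obtain ⟨d, hd, hrange⟩ := hc.exists_isCycle (q := q)
    (hperm.length_eq.trans (by simp; omega))
  refine ⟨d, hd, hrange.trans (Set.ext fun v => hperm.mem_iff.trans ?_)⟩
  simp only [List.mem_append, List.mem_map, List.mem_range'_1, List.mem_cons, Set.mem_union,
    Set.mem_image, Set.mem_Icc, Set.mem_insert_iff, Set.mem_Ico, Nat.lt_succ_iff, ← add_assoc]

lemma exists_two_disjoint_detours {q l : ℕ} (hq : 3 ≤ q) {f U : ℕ → V}
    (hf : Set.InjOn f (Set.Iio q)) (hfarc : ∀ t, t + 1 < q → T (f t) (f (t + 1)))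
    (hU : IsReversePath T l U) (hlong : ∀ i j, i < l → j + (q - 1) ≤ i → T (U i) (U j))
    (hfU : Disjoint (f '' Set.Iio q) (U '' Set.Iio l)) {g α β : ℕ} (hαg : α ≤ g) (hgβ : g < β)
    (hβq : β < q) (hβ : 2 ≤ β) (hα : g + 3 ≤ q + α) (hαβ : α + β ≤ g + 3)
    {a₁ a₂ b₁ b₂ : ℕ} (ha : a₁ ≠ a₂) (ha₁ : 4 * q - 5 ≤ a₁) (ha₁l : a₁ < l)
    (ha₂ : 4 * q - 5 ≤ a₂) (ha₂l : a₂ < l) (hb : b₁ ≠ b₂) (hb₁ : b₁ ≤ q) (hb₂ : b₂ ≤ q)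
    (hfa₁ : T (f g) (U a₁)) (hbf₁ : T (U b₁) (f α)) (hfa₂ : T (f (q - 1)) (U a₂))
    (hbf₂ : T (U b₂) (f β)) :
    ∃ c₁ c₂ : ZMod q → V, IsCycle T q c₁ ∧ IsCycle T q c₂ ∧
      Disjoint (Set.range c₁) (Set.range c₂) ∧
      Set.range c₁ ∪ Set.range c₂ ⊆ f '' Set.Iio q ∪ U '' Set.Iio l := by
  obtain ⟨k₁, rfl⟩ := Nat.exists_eq_add_of_le hαg
  obtain ⟨k₂, hk₂⟩ : ∃ k₂, q - 1 = β + k₂ := ⟨q - 1 - β, by omega⟩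
  rw [hk₂] at hfa₂
  have hI₁ : Set.Icc α (α + k₁) ⊆ Set.Iio q := fun t ht => by grind
  have hI₂ : Set.Icc β (β + k₂) ⊆ Set.Iio q := fun t ht => by grind
  obtain ⟨c₁, hc₁, hrange₁⟩ := exists_isCycle_detour (lo := 2 * q + β - 3) (m := q - 3 - k₁)
    (hf.mono hI₁) (fun t _ ht => hfarc t (by omega)) hU hlong
    (hfU.mono_left (Set.image_mono hI₁)) (by omega) (by omega) (by omega) ha₁l hfa₁ hbf₁
  obtain ⟨c₂, hc₂, hrange₂⟩ := exists_isCycle_detour (lo := 2 * q - 1) (m := β - 2)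
    (hf.mono hI₂) (fun t _ ht => hfarc t (by omega)) hU hlong
    (hfU.mono_left (Set.image_mono hI₂)) (by omega) (by omega) (by omega) ha₂l hfa₂ hbf₂
  have hJ₁ : insert a₁ (insert b₁ (Set.Ico (2 * q + β - 3) (2 * q + β - 3 + (q - 3 - k₁)))) ⊆
      Set.Iio l := fun i hi => by grind
  have hJ₂ : insert a₂ (insert b₂ (Set.Ico (2 * q - 1) (2 * q - 1 + (β - 2)))) ⊆
      Set.Iio l := fun i hi => by grind
  refine ⟨c₁, c₂, hc₁, hc₂, ?_, ?_⟩ <;> rw [hrange₁, hrange₂]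
  · rw [Set.disjoint_union_left, Set.disjoint_union_right, Set.disjoint_union_right]
    refine ⟨⟨Disjoint.image ?_ hf hI₁ hI₂, ?_⟩, ?_, Disjoint.image ?_ hU.injOn hJ₁ hJ₂⟩
    · exact Set.disjoint_left.2 fun t => by grind
    · exact hfU.mono (Set.image_mono hI₁) (Set.image_mono hJ₂)
    · exact hfU.symm.mono (Set.image_mono hJ₁) (Set.image_mono hI₂)
    · exact Set.disjoint_left.2 fun i => by
        simp only [Set.mem_insert_iff, Set.mem_Ico]
        omega
  · exact Set.union_subset
      (Set.union_subset_union (Set.image_mono hI₁) (Set.image_mono hJ₁))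
      (Set.union_subset_union (Set.image_mono hI₂) (Set.image_mono hJ₂))

-- `[α, g]` and `[β, q - 1]` are to be segments of a `q`-cycle: each has at most `q - 2` vertices,
-- and together they omit at most two.
lemma exists_segment_starts {q g : ℕ} (hq : 3 ≤ q) (hg : g + 1 < q) {M : Set ℕ}
    (hM : ∀ s < q, ∀ t < q, s ∉ M → t ∉ M → s = t) (hgM : g ∈ M) (hqM : q - 1 ∈ M) :
    ∃ α ∈ M, ∃ β ∈ M, α ≤ g ∧ g < β ∧ β < q ∧ 2 ≤ β ∧ g + 3 ≤ q + α ∧ α + β ≤ g + 3 := by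
  have hor {s t : ℕ} (hs : s < q) (ht : t < q) (hst : s ≠ t) : s ∈ M ∨ t ∈ M := by
    by_contra! h
    exact hst (hM s hs t ht h.1 h.2)
  rcases Nat.eq_zero_or_pos g with rfl | hg₀
  · rcases hq.eq_or_lt with rfl | hq'
    · exact ⟨0, hgM, 2, hqM, by omega⟩
    rcases hor (s := 2) (t := 3) (by omega) (by omega) (by omega) with h | h
    exacts [⟨0, hgM, 2, h, by omega⟩, ⟨0, hgM, 3, h, by omega⟩]
  rcases (Nat.succ_le_of_lt hg).eq_or_lt with rfl | hg'
  · rcases (Nat.succ_le_of_lt hg₀).eq_or_lt with rfl | hg₁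
    · exact ⟨1, hgM, 2, hqM, by omega⟩
    rcases hor (s := 1) (t := 2) (by omega) (by omega) (by omega) with h | h
    exacts [⟨1, h, g + 1, hqM, by omega⟩, ⟨2, h, g + 1, hqM, by omega⟩]
  by_cases h₀ : 0 ∈ M
  · rcases hor (s := g + 1) (t := g + 2) hg hg' (by omega) with h | h
    exacts [⟨0, h₀, g + 1, h, by omega⟩, ⟨0, h₀, g + 2, h, by omega⟩]
  · have hmem {t : ℕ} (ht : t < q) (ht₀ : 0 ≠ t) : t ∈ M :=
      (hor (by omega) ht ht₀).resolve_left h₀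
    exact ⟨1, hmem (by omega) (by omega), g + 1, hmem hg (by omega), by omega⟩

lemma injOn_add_natCast {q : ℕ} (x : ZMod q) : Set.InjOn (fun t : ℕ => x + t) (Set.Iio q) :=
  (add_right_injective x).comp_injOn (CharP.natCast_injOn_Iio (ZMod q) q)

lemma add_one_add_natCast_pred {q : ℕ} (hq : 0 < q) (x : ZMod q) :
    x + 1 + ((q - 1 : ℕ) : ZMod q) = x := by
  simp [Nat.cast_pred hq]

lemma exists_segments {q : ℕ} (hq : 3 ≤ q) {S : Set (ZMod q)} (hS : Sᶜ.Subsingleton)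
    {x y : ZMod q} (hx : x ∈ S) (hy : y ∈ S) (hxy : x ≠ y) :
    ∃ g α β : ℕ, x + 1 + g = y ∧ x + 1 + α ∈ S ∧ x + 1 + β ∈ S ∧ α ≤ g ∧ g < β ∧ β < q ∧ 2 ≤ β ∧
      g + 3 ≤ q + α ∧ α + β ≤ g + 3 := by
  have : NeZero q := ⟨by omega⟩
  have hlast : x + 1 + ((q - 1 : ℕ) : ZMod q) = x := add_one_add_natCast_pred (by omega) x
  obtain ⟨g, hgq, hg⟩ : ∃ g < q, x + 1 + (g : ZMod q) = y :=
    ⟨(y - (x + 1)).val, ZMod.val_lt _, by simp⟩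
  have hne : g ≠ q - 1 := by
    rintro rfl
    exact hxy (hlast.symm.trans hg)
  have hgq' : g + 1 < q := by omega
  obtain ⟨α, hα, β, hβ, h⟩ := exists_segment_starts (M := {t : ℕ | x + 1 + (t : ZMod q) ∈ S}) hq
    hgq' (fun s hs t ht hsM htM => injOn_add_natCast (x + 1) hs ht (hS hsM htM))
    (by rwa [Set.mem_ofPred_eq, hg]) (by rwa [Set.mem_ofPred_eq, hlast])
  exact ⟨g, α, β, hg, hα, hβ, h⟩

lemma HasMatching.exists_injective {ι κ : Type*} {u : ι → V} {c : κ → V} {A : Set ι} {B : Set κ}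
    {r : ℕ} (h : HasMatching T (u '' A) (c '' B) r) :
    ∃ (x : Fin r → ι) (y : Fin r → κ), Function.Injective x ∧ Function.Injective y ∧
      ∀ i, x i ∈ A ∧ y i ∈ B ∧ T (u (x i)) (c (y i)) := by
  obtain ⟨e, he, hne⟩ := h
  choose hx hy harc using he
  choose x hxA hxe using hx
  choose y hyB hye using hy
  refine ⟨x, y, fun i j hij => ?_, fun i j hij => ?_, fun i => ⟨hxA i, hyB i, ?_⟩⟩
  · by_contra h
    exact (hne i j h).1 (by rw [← hxe i, ← hxe j, hij])
  · by_contra h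
    exact (hne i j h).2 (by rw [← hye i, ← hye j, hij])
  · rw [hxe, hye]
    exact harc i

lemma subsingleton_compl_range_of_injective {α β : Type*} [Finite β] {w : α → β}
    (hw : Function.Injective w) (hcard : Nat.card β ≤ Nat.card α + 1) :
    (Set.range w)ᶜ.Subsingleton := by
  rw [← Set.ncard_le_one_iff_subsingleton, Set.ncard_compl, Set.ncard_range_of_injective hw]
  omega

lemma exists_ne_mem_of_subsingleton_compl {β : Type*} {z : Fin 3 → β} (hz : Function.Injective z)
    {S : Set β} (hS : Sᶜ.Subsingleton) : ∃ i j, i ≠ j ∧ z i ∈ S ∧ z j ∈ S := by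
  by_contra! h
  by_cases h₀ : z 0 ∈ S
  · exact absurd (hz (hS (h 0 1 (by decide) h₀) (h 0 2 (by decide) h₀))) (by decide)
  · have hmem {i : Fin 3} (hi : 0 ≠ i) : z i ∈ S := by
      by_contra h'
      exact hi (hz (hS h₀ h'))
    exact h 1 2 (by decide) (hmem (by decide)) (hmem (by decide))

lemma exists_two_disjoint_isCycle (hT : IsTournament T) {q l : ℕ} (hq : 3 ≤ q) {c : ZMod q → V}
    (hc : IsCycle T q c) {S : Set V} (hcS : Disjoint (Set.range c) S) {u : Fin l → V}
    (hu : IsHamPathOn T S u) (hfree : IsCycleFreeOn T q S)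
    (hin : HasMatching T (u '' {i : Fin l | (i : ℕ) < q + 1}) (Set.range c) (q - 1))
    (hout : HasMatching T (Set.range c) (u '' {i : Fin l | 4 * q - 5 ≤ (i : ℕ)}) 3) :
    ∃ c₁ c₂ : ZMod q → V, IsCycle T q c₁ ∧ IsCycle T q c₂ ∧
      Disjoint (Set.range c₁) (Set.range c₂) ∧ Set.range c₁ ∪ Set.range c₂ ⊆ Set.range c ∪ S := by
  have : NeZero q := ⟨by omega⟩
  have : Nonempty V := ⟨c 0⟩
  obtain ⟨U, hU, hUu, rfl⟩ := hu.exists_isReversePath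
  have hlong (i j : ℕ) : i < l → j + (q - 1) ≤ i → T (U i) (U j) := hU.arc_of_add_le hT hq hfree
  rw [← Set.image_univ] at hin hout
  obtain ⟨b, w, hb, hw, hin⟩ := hin.exists_injective
  obtain ⟨z, a, hz, ha, hout⟩ := hout.exists_injective
  have hsub : (Set.range w)ᶜ.Subsingleton :=
    subsingleton_compl_range_of_injective hw (by simp; omega)
  obtain ⟨i, j, hij, hi, hj⟩ := exists_ne_mem_of_subsingleton_compl hz hsub
  obtain ⟨g, α, β, hg, ⟨s, hs⟩, ⟨t, ht⟩, hαg, hgβ, hβq, hβ, hα, hαβ⟩ :=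
    exists_segments hq hsub hi hj (hz.ne hij)
  have hst : s ≠ t := by
    rintro rfl
    have := injOn_add_natCast (z i + 1) (hαg.trans_lt (hgβ.trans hβq)) hβq (hs.symm.trans ht)
    omega
  let f (t : ℕ) : V := c (z i + 1 + t)
  have hfinj : Set.InjOn f (Set.Iio q) := hc.1.comp_injOn (injOn_add_natCast (z i + 1))
  have hfarc (t : ℕ) : T (f t) (f (t + 1)) := by
    simpa [f, add_assoc] using hc.2 (z i + 1 + t)
  have hfc : f '' Set.Iio q ⊆ Set.range c := Set.image_subset_iff.2 fun t _ => ⟨_, rfl⟩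
  have hgout : T (f g) (U (a j)) := by simpa [f, hg, hUu] using (hout j).2.2
  have hαin : T (U (b s)) (f α) := by simpa [f, ← hs, hUu] using (hin s).2.2
  have hlastout : T (f (q - 1)) (U (a i)) := by
    simpa only [f, add_one_add_natCast_pred (show 0 < q by omega), hUu] using (hout i).2.2
  have hβin : T (U (b t)) (f β) := by simpa [f, ← ht, hUu] using (hin t).2.2
  obtain ⟨c₁, c₂, hc₁, hc₂, hdisj, hsubset⟩ := exists_two_disjoint_detours hq hfinj
    (fun t _ => hfarc t) hU hlong (hcS.mono_left hfc) hαg hgβ hβq hβ hα hαβ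
    (Fin.val_injective.ne (ha.ne hij.symm)) (hout j).2.1 (a j).isLt (hout i).2.1 (a i).isLt
    (Fin.val_injective.ne (hb.ne hst)) (Nat.le_of_lt_succ (hin s).1) (Nat.le_of_lt_succ (hin t).1)
    hgout hαin hlastout hβin
  exact ⟨c₁, c₂, hc₁, hc₂, hdisj, hsubset.trans (Set.union_subset_union_left _ hfc)⟩

namespace DisjointCycles

variable {n q : ℕ} {C : Fin n → ZMod q → V} {c : ZMod q → V}

lemma update (hC : DisjointCycles C) {j₀ : Fin n}
    (hc : ∀ j ≠ j₀, Disjoint (Set.range c) (Set.range (C j))) :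
    DisjointCycles (Function.update C j₀ c) := by
  intro j j' hjj'
  by_cases hj : j = j₀ <;> by_cases hj' : j' = j₀
  · exact absurd (hj.trans hj'.symm) hjj'
  · simpa [hj, hj'] using hc j' hj'
  · simpa [hj, hj'] using (hc j hj).symm
  · simpa [hj, hj'] using hC j j' hjj'

lemma cons (hC : DisjointCycles C) (hc : ∀ j, Disjoint (Set.range c) (Set.range (C j))) :
    DisjointCycles (Fin.cons c C : Fin (n + 1) → ZMod q → V) := by
  intro j j' hjj'
  cases j using Fin.cases <;> cases j' using Fin.cases
  · exact absurd rfl hjj'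
  · simpa using hc _
  · simpa using (hc _).symm
  · simpa using hC _ _ fun h => hjj' (congrArg Fin.succ h)

end DisjointCycles

lemma HasDisjointCycles.of_replace {n q : ℕ} {C : Fin n → ZMod q → V}
    (hC : ∀ j, IsCycle T q (C j)) (hdisj : DisjointCycles C) (j₀ : Fin n) {c₁ c₂ : ZMod q → V}
    (hc₁ : IsCycle T q c₁) (hc₂ : IsCycle T q c₂) (hc : Disjoint (Set.range c₁) (Set.range c₂))
    (hsub : Set.range c₁ ∪ Set.range c₂ ⊆ Set.range (C j₀) ∪ (⋃ j, Set.range (C j))ᶜ) :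
    HasDisjointCycles T (n + 1) q := by
  have hothers (j) (hj : j ≠ j₀) :
      Disjoint (Set.range c₁ ∪ Set.range c₂) (Set.range (C j)) := by
    refine Disjoint.mono_left hsub (Set.disjoint_union_left.2 ⟨hdisj j₀ j hj.symm, ?_⟩)
    exact disjoint_compl_left.mono_right (Set.subset_iUnion (fun j => Set.range (C j)) j)
  refine ⟨Fin.cons c₁ (Function.update C j₀ c₂), fun j => ?_, ?_⟩
  · cases j using Fin.cases with
    | zero => exact hc₁
    | succ j =>
      rcases eq_or_ne j j₀ with rfl | hj
      · simpa using hc₂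
      · simpa [hj] using hC j
  · refine (hdisj.update fun j hj => (Set.disjoint_union_left.1 (hothers j hj)).2).cons fun j => ?_
    rcases eq_or_ne j j₀ with rfl | hj
    · simpa using hc
    · simpa [hj] using (Set.disjoint_union_left.1 (hothers j hj)).1

theorem stmt18_general (hT : IsTournament T) {q n l : ℕ} (hq : 3 ≤ q) {C : Fin n → ZMod q → V}
    (hC : ∀ j, IsCycle T q (C j)) (hdisj : DisjointCycles C)
    (hfree : IsCycleFreeOn T q (⋃ j, Set.range (C j))ᶜ) {u : Fin l → V}
    (hP : IsHamPathOn T (⋃ j, Set.range (C j))ᶜ u) (j₀ : Fin n)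
    (hin : HasMatching T (u '' {i : Fin l | (i : ℕ) < q + 1}) (Set.range (C j₀)) (q - 1))
    (hout : HasMatching T (Set.range (C j₀)) (u '' {i : Fin l | 4 * q - 5 ≤ (i : ℕ)}) 3) :
    HasDisjointCycles T (n + 1) q := by
  have hcS : Disjoint (Set.range (C j₀)) (⋃ j, Set.range (C j))ᶜ :=
    disjoint_compl_right.mono_left (Set.subset_iUnion (fun j => Set.range (C j)) j₀)
  obtain ⟨c₁, c₂, hc₁, hc₂, hc, hsub⟩ :=
    exists_two_disjoint_isCycle hT hq (hC j₀) hcS hP hfree hin hout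
  exact HasDisjointCycles.of_replace hC hdisj j₀ hc₁ hc₂ hc hsub

end

theorem stmt18 {V : Type*} [Fintype V] (T : V → V → Prop) (hT : IsTournament T)
    (q n : ℕ) (hq : 10 ≤ q)
    (C : Fin n → ZMod q → V) (hC : ∀ j, IsCycle T q (C j)) (hdisj : DisjointCycles C)
    (hfree : ¬ ∃ c : ZMod q → V, IsCycle T q c ∧
      Set.range c ⊆ (⋃ j, Set.range (C j))ᶜ)
    (l : ℕ) (hl : 4 * q - 5 ≤ l) (u : Fin l → V)
    (hP : IsHamPathOn T ((⋃ j, Set.range (C j))ᶜ) u)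
    (j₀ : Fin n)
    (hm1 : HasMatching T (u '' {i : Fin l | (i : ℕ) < q + 1}) (Set.range (C j₀)) (q - 1))
    (hm2 : HasMatching T (Set.range (C j₀)) (u '' {i : Fin l | 4 * q - 5 ≤ (i : ℕ)}) 3) :
    HasDisjointCycles T (n + 1) q :=
  stmt18_general hT (by omega) hC hdisj hfree hP j₀ hm1 hm2
end

section
/- Let q ≥ 10 be an integer, let T be a tournament, and let Ω be a collection of pairwise vertex-disjoint q-cycles of T such that the subtournament T ∖ Ω contains no q-cycle. Let P = (u_l, …, u₂, u₁) be a Hamiltonian path of T ∖ Ω (so (u_{i+1}, u_i) is an arc for each i) with l ≥ 4q − 5, and set U₁ = {u₁, …, u_{q+1}} and U₂ = {u_{4q−4}, …, u_l}. Let Cᵢ and Cⱼ be two distinct cycles of Ω such that there is a q-matching from U₁ to Cᵢ, a 3-matching from Cⱼ to U₂, and the number of arcs from Cᵢ to Cⱼ is at least q² − q + 3. Then T contains |Ω| + 1 pairwise vertex-disjoint q-cycles. -/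
open Set

/-!
By Moon's theorem, a tournament with a Hamiltonian cycle of length `m` has cycles of all lengths
from `3` to `m`. As `T ∖ Ω` has no `q`-cycle, every arc between two vertices of `P` at distance at
least `q - 1` along `P` follows the direction of `P`, so `P` can be shortcut from `U₂` to its middle
part and from there to `U₁`.

`Cᵢ` and `Cⱼ` are traded for three cycles, each of which runs from `U₂` through a block of the
middle of `P` to `U₁`, then along a segment of `Cᵢ`, then along a segment of `Cⱼ`, and returns to
`U₂` by an arc of the `3`-matching. The segments of `Cⱼ` are those cut out by the three exits,
shortened to at most `q - 3` vertices, which wastes at most one vertex. The segments of `Cᵢ` may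
start anywhere: the `q`-matching reaches every vertex of `Cᵢ`. Fewer than `q` arcs from `Cᵢ` to
`Cⱼ` are missing, so among the `q` rotations of `Cᵢ` there is one for which all three arcs from the
segments of `Cᵢ` to those of `Cⱼ` are present. The lengths can be chosen such that the middle of `P`
contributes at most `q - 5` vertices.
-/

section Development

variable {V : Type*} {T : V → V → Prop} {q : ℕ}

/-- `HasHamPath T S n x y`: the vertices of `S`, `n` in number, can be listed as a directed path
of `T` from `x` to `y`. Paths are nonempty, and a single vertex is a path from itself to itself. -/
def HasHamPath (T : V → V → Prop) (S : Set V) (n : ℕ) (x y : V) : Prop :=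
  ∃ L : List V, L.Nodup ∧ L.IsChain T ∧ L.head? = some x ∧ L.getLast? = some y ∧
    L.length = n ∧ {v | v ∈ L} = S

/-- The set `{u x, …, u (x + n - 1)}` of `n` consecutive vertices of the sequence `u`, starting at
index `x`; indices beyond the end of the sequence are ignored. -/
def pathSegment {l : ℕ} (u : Fin l → V) (x n : ℕ) : Set V :=
  u '' {i | x ≤ (i : ℕ) ∧ (i : ℕ) < x + n}

theorem IsTournament.asymm_s19 (hT : IsTournament T) {x y : V} (hxy : T x y) : ¬ T y x :=
  (hT.2 x y fun h => hT.1 y (h ▸ hxy)).1 hxy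

theorem IsTournament.arc_of_not_arc_s19 (hT : IsTournament T) {x y : V} (hne : x ≠ y)
    (hxy : ¬ T x y) : T y x :=
  (hT.2 y x hne.symm).2 hxy

section Paths

theorem HasHamPath.singleton (x : V) : HasHamPath T {x} 1 x x :=
  ⟨[x], by simp⟩

theorem HasHamPath.append {S S' : Set V} {n n' : ℕ} {x y x' y' : V} (h : HasHamPath T S n x y)
    (h' : HasHamPath T S' n' x' y') (hS : Disjoint S S') (hyx : T y x') :
    HasHamPath T (S ∪ S') (n + n') x y' := by
  obtain ⟨L, hnodup, hchain, hhead, hlast, rfl, rfl⟩ := h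
  obtain ⟨L', hnodup', hchain', hhead', hlast', rfl, rfl⟩ := h'
  refine ⟨L ++ L', hnodup.append hnodup' fun v hv hv' => disjoint_left.1 hS hv hv', ?_, ?_, ?_,
    List.length_append, ?_⟩
  · simpa [List.isChain_append, hlast, hhead'] using ⟨hchain, hchain', hyx⟩
  · simp [hhead]
  · simp [hlast']
  · ext v
    simp

theorem HasHamPath.exists_isCycle {S : Set V} {n : ℕ} {x y : V} (h : HasHamPath T S n x y)
    (hyx : T y x) : ∃ c : ZMod n → V, IsCycle T n c ∧ range c = S := by
  obtain ⟨L, hnodup, hchain, hhead, hlast, rfl, rfl⟩ := h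
  obtain ⟨n, hn⟩ : ∃ n, L.length = n + 1 :=
    Nat.exists_eq_succ_of_ne_zero fun h => by simp [List.length_eq_zero_iff.1 h] at hhead
  rw [List.head?_eq_getElem?, List.getElem?_eq_some_iff] at hhead
  rw [List.getLast?_eq_getElem?, List.getElem?_eq_some_iff] at hlast
  obtain ⟨_, rfl⟩ := hhead
  obtain ⟨_, rfl⟩ := hlast
  rw [hn]
  refine ⟨fun i : Fin (n + 1) => L.get (i.cast hn.symm), ⟨?_, fun i : Fin (n + 1) => ?_⟩, ?_⟩
  · exact (List.nodup_iff_injective_get.1 hnodup).comp (Fin.cast_injective _)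
  · induction i using Fin.lastCases with
    | last =>
      suffices T (L.get ((Fin.last n).cast hn.symm)) (L.get ((Fin.last n + 1).cast hn.symm)) from
        this
      simpa [Fin.last_add_one, hn] using hyx
    | cast i =>
      suffices T (L.get (i.castSucc.cast hn.symm)) (L.get ((i.castSucc + 1).cast hn.symm)) from this
      simpa [Fin.coeSucc_eq_succ] using List.isChain_iff_getElem.1 hchain i (by omega)
  · exact ((Fin.castOrderIso hn.symm).surjective.range_comp L.get).trans (Set.range_list_get L)

variable {S : Set V} {l : ℕ} {u : Fin l → V}

theorem pathSegment_subset_range (u : Fin l → V) (x n : ℕ) : pathSegment u x n ⊆ range u :=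
  image_subset_range _ _

theorem disjoint_pathSegment (hu : Function.Injective u) {x n y m : ℕ} (h : x + n ≤ y) :
    Disjoint (pathSegment u x n) (pathSegment u y m) :=
  (disjoint_image_iff hu).2 <| disjoint_left.2 fun _ hi hj => by
    have := hi.2
    have := hj.1
    omega

theorem mem_pathSegment (hu : Function.Injective u) {i : Fin l} {x n : ℕ} :
    u i ∈ pathSegment u x n ↔ x ≤ i ∧ i < x + n :=
  hu.mem_set_image

theorem pathSegment_zero (u : Fin l → V) (x : ℕ) : pathSegment u x 0 = ∅ :=
  image_eq_empty.2 <| eq_empty_of_forall_notMem fun _ hi => absurd hi.2 hi.1.not_gt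

theorem pathSegment_one (u : Fin l → V) (i : Fin l) : pathSegment u i 1 = {u i} := by
  have h : {j : Fin l | (i : ℕ) ≤ j ∧ (j : ℕ) < i + 1} = {i} := by
    ext j
    simp only [mem_ofPred_eq, mem_singleton_iff, Fin.ext_iff]
    omega
  rw [pathSegment, h, image_singleton]

theorem pathSegment_add (u : Fin l → V) (x n m : ℕ) :
    pathSegment u x (n + m) = pathSegment u (x + n) m ∪ pathSegment u x n := by
  simp only [pathSegment, ← image_union]
  congr 1
  ext i
  simp only [mem_ofPred_eq, mem_union]
  omega

theorem IsHamPathOn.hasHamPath_pathSegment (hu : IsHamPathOn T S u) {x n : ℕ} (h : x + n < l) :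
    HasHamPath T (pathSegment u x (n + 1)) (n + 1) (u ⟨x + n, h⟩) (u ⟨x, by omega⟩) := by
  induction n with
  | zero => exact pathSegment_one u ⟨x, h⟩ ▸ HasHamPath.singleton _
  | succ n ih =>
    rw [pathSegment_add, add_comm (n + 1)]
    refine .append ?_ (ih (by omega)) (disjoint_pathSegment hu.1 le_rfl).symm (hu.2.2 (x + n) h)
    exact pathSegment_one u ⟨x + n + 1, h⟩ ▸ HasHamPath.singleton _

end Paths

section Cycles

theorem IsCycle.ncard_range {c : ZMod q → V} (hc : IsCycle T q c) : (range c).ncard = q := by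
  rw [ncard_range_of_injective hc.1, Nat.card_zmod]

/-- Opening a cycle at a vertex gives a Hamiltonian path of its vertex set; like all paths in the
sense of `IsHamPathOn`, it is listed against the direction of its arcs. -/
def openAt (c : ZMod q → V) (p : ZMod q) : Fin q → V :=
  fun i => c (p - i)

theorem range_openAt [NeZero q] (c : ZMod q → V) (p : ZMod q) : range (openAt c p) = range c := by
  refine Subset.antisymm (range_comp_subset_range _ c) (range_subset_iff.2 fun i => ?_)
  exact ⟨⟨(p - i).val, ZMod.val_lt _⟩, by simp [openAt]⟩

theorem IsCycle.isHamPathOn_openAt [NeZero q] {c : ZMod q → V} (hc : IsCycle T q c) (p : ZMod q) :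
    IsHamPathOn T (range c) (openAt c p) := by
  refine ⟨fun i j hij => ?_, range_openAt c p, fun i hi => ?_⟩
  · have h := (ZMod.natCast_eq_natCast_iff' _ _ _).1 (sub_right_injective (hc.1 hij))
    rwa [Nat.mod_eq_of_lt i.2, Nat.mod_eq_of_lt j.2, ← Fin.ext_iff] at h
  · simpa [openAt, sub_add_eq_sub_sub] using hc.2 (p - (i + 1 : ℕ))

end Cycles

section Pancyclicity

variable {m k : ℕ} {h : ZMod m → V} {c : ZMod k → V}

theorem exists_and_not_add_one [NeZero m] {P : ZMod m → Prop} (hP : ∃ i, P i)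
    (hP' : ∃ i, ¬ P i) : ∃ i, P i ∧ ¬ P (i + 1) := by
  by_contra! hstep
  obtain ⟨i, hi⟩ := hP
  obtain ⟨j, hj⟩ := hP'
  have hadd (n : ℕ) : P (i + n) := by
    induction n with
    | zero => simpa using hi
    | succ n ih => simpa [add_assoc] using hstep _ ih
  exact hj (by simpa using hadd (j - i).val)

theorem IsCycle.exists_isCycle_three (hT : IsTournament T) [NeZero m] (hh : IsCycle T m h) :
    ∃ c : ZMod 3 → V, IsCycle T 3 c ∧ range c ⊆ range h := by
  obtain ⟨i, hi, hi'⟩ := exists_and_not_add_one (P := fun i => T (h 0) (h i))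
    ⟨0 + 1, hh.2 0⟩ ⟨0, hT.1 _⟩
  have hne : h 0 ≠ h (i + 1) := fun h0 => hT.asymm_s19 hi (h0 ▸ hh.2 i)
  have hirrefl {v w : V} (hvw : T v w) : v ≠ w := fun heq => hT.1 w (heq ▸ hvw)
  have hpath : HasHamPath T ({h 0} ∪ {h i} ∪ {h (i + 1)}) 3 (h 0) (h (i + 1)) := by
    refine ((HasHamPath.singleton _).append (.singleton _) ?_ hi).append (.singleton _) ?_ (hh.2 i)
    · exact disjoint_singleton.2 (hirrefl hi)
    · simpa using ⟨(hirrefl (hh.2 i)).symm, hne.symm⟩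
  obtain ⟨c, hc, hrange⟩ := hpath.exists_isCycle (hT.arc_of_not_arc_s19 hne hi')
  refine ⟨c, hc, hrange.subset.trans ?_⟩
  rintro _ ((rfl | rfl) | rfl) <;> exact mem_range_self _

theorem IsCycle.exists_isCycle_detour [NeZero k] (hc : IsCycle T k c) {S : Set V} {n d k' : ℕ}
    {x y : V} (hpath : HasHamPath T S n x y) (hS : Disjoint (range c) S) (hd : 0 < d) (hdk : d ≤ k)
    {i : ZMod k} (hix : T (c i) x) (hyi : T y (c (i + d))) (hk' : k' + d = k + n + 1) :
    ∃ c' : ZMod k' → V, IsCycle T k' c' ∧ range c' ⊆ range c ∪ S := by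
  obtain ⟨r, rfl⟩ := Nat.exists_eq_add_of_le' hdk
  obtain rfl : k' = r + 1 + n := by omega
  have hkept := (hc.isHamPathOn_openAt i).hasHamPath_pathSegment (x := 0) (n := r) (by omega)
  have hsub : pathSegment (openAt c i) 0 (r + 1) ⊆ range c :=
    (pathSegment_subset_range _ _ _).trans (range_openAt c i).subset
  have hstart : (i - r : ZMod (r + d)) = i + d := by
    have hzero := ZMod.natCast_self (r + d)
    push_cast at hzero
    linear_combination -hzero
  obtain ⟨c', hc', hrange⟩ := (hkept.append hpath (hS.mono_left hsub)
    (by simpa [openAt] using hix)).exists_isCycle (by simpa [openAt, hstart] using hyi)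
  exact ⟨c', hc', hrange ▸ union_subset_union_left _ hsub⟩

theorem IsCycle.exists_isCycle_succ (hT : IsTournament T) (hh : IsCycle T m h) (hk : 2 ≤ k)
    (hkm : k < m) (hc : IsCycle T k c) (hsub : range c ⊆ range h) :
    ∃ c' : ZMod (k + 1) → V, IsCycle T (k + 1) c' ∧ range c' ⊆ range h := by
  have : NeZero k := ⟨by omega⟩
  have : NeZero m := ⟨by omega⟩
  by_cases! hins : ∃ w ∈ range h, w ∉ range c ∧ ∃ i, T (c i) w ∧ T w (c (i + 1))
  · obtain ⟨w, hwh, hwc, i, hiw, hwi⟩ := hins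
    obtain ⟨c', hc', hrange⟩ := hc.exists_isCycle_detour (k' := k + 1) (d := 1) (.singleton w)
      (disjoint_singleton_right.2 hwc) one_pos NeZero.one_le hiw (by simpa using hwi) rfl
    exact ⟨c', hc', hrange.trans (union_subset hsub (singleton_subset_iff.2 hwh))⟩
  have hdom {w : V} (hwh : w ∈ range h) (hwc : w ∉ range c) {i : ZMod k} (hi : T (c i) w)
      (j : ZMod k) : T (c j) w := by
    by_contra hj
    obtain ⟨i, hi, hi'⟩ := exists_and_not_add_one (P := fun i => T (c i) w) ⟨i, hi⟩ ⟨j, hj⟩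
    exact hins w hwh hwc i hi (hT.arc_of_not_arc_s19 (fun h => hwc ⟨_, h⟩) hi')
  obtain ⟨_, ⟨z, rfl⟩, hz⟩ : ∃ v ∈ range h, v ∉ range c :=
    exists_mem_notMem_of_ncard_lt_ncard (by rwa [hc.ncard_range, hh.ncard_range]) (finite_range _)
  obtain ⟨s, hs⟩ := hsub (mem_range_self 0)
  obtain ⟨i, ⟨j, hj⟩, hi⟩ := exists_and_not_add_one (P := fun i => h i ∈ range c)
    ⟨s, hs ▸ mem_range_self 0⟩ ⟨z, hz⟩
  -- Along `h`, leaving `c` leads to a vertex dominated by `c`; from there one can return to `c`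
  -- only through a vertex dominating it.
  obtain ⟨t, ⟨htc, ht⟩, ht'⟩ := exists_and_not_add_one
    (P := fun i => h i ∉ range c ∧ T (c 0) (h i))
    ⟨i + 1, hi, hdom (mem_range_self _) hi (hj ▸ hh.2 i) 0⟩
    ⟨s, fun hs' => hs'.1 (hs ▸ mem_range_self 0)⟩
  have htc' : h (t + 1) ∉ range c := by
    rintro ⟨r, hr⟩
    exact hT.asymm_s19 (hdom (mem_range_self t) htc ht r) (hr ▸ hh.2 t)
  have hback (r : ZMod k) : T (h (t + 1)) (c r) :=
    hT.arc_of_not_arc_s19 (fun h => htc' ⟨r, h⟩) fun hr =>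
      ht' ⟨htc', hdom (mem_range_self _) htc' hr 0⟩
  have hpath : HasHamPath T ({h t} ∪ {h (t + 1)}) 2 (h t) (h (t + 1)) :=
    (HasHamPath.singleton _).append (.singleton _)
      (disjoint_singleton.2 fun heq => hT.1 (h t) (by simpa [← heq] using hh.2 t)) (hh.2 t)
  obtain ⟨c', hc', hrange⟩ := hc.exists_isCycle_detour (k' := k + 1) hpath
    (by simp [htc, htc']) two_pos hk ht (hback _) (by omega)
  exact ⟨c', hc', hrange.trans <| union_subset hsub <| union_subset
    (singleton_subset_iff.2 (mem_range_self _)) (singleton_subset_iff.2 (mem_range_self _))⟩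

theorem IsCycle.exists_isCycle_of_le (hT : IsTournament T) (hh : IsCycle T m h) (hk : 3 ≤ k)
    (hkm : k ≤ m) : ∃ c : ZMod k → V, IsCycle T k c ∧ range c ⊆ range h := by
  have : NeZero m := ⟨by omega⟩
  induction k, hk using Nat.le_induction with
  | base => exact hh.exists_isCycle_three hT
  | succ k hk ih =>
    obtain ⟨c, hc, hsub⟩ := ih (by omega)
    exact hh.exists_isCycle_succ hT (by omega) hkm hc hsub

end Pancyclicity

section FarArcs

variable {S : Set V} {l : ℕ} {u : Fin l → V}

theorem IsHamPathOn.arc_of_add_le (hT : IsTournament T) (hq : 3 ≤ q) (hu : IsHamPathOn T S u)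
    (hfree : ¬ ∃ c : ZMod q → V, IsCycle T q c ∧ range c ⊆ S) (i j : Fin l)
    (hij : (j : ℕ) + q ≤ i + 1) : T (u i) (u j) := by
  by_contra hback
  obtain ⟨i, hi⟩ := i
  dsimp only at hij
  obtain ⟨n, rfl⟩ := Nat.exists_eq_add_of_le (show (j : ℕ) ≤ i by omega)
  have hne : ⟨j + n, hi⟩ ≠ j := fun h => by
    have := Fin.ext_iff.1 h
    dsimp only at this
    omega
  obtain ⟨h, hh, hrange⟩ := (hu.hasHamPath_pathSegment hi).exists_isCycle
    (hT.arc_of_not_arc_s19 (hu.1.ne hne) hback)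
  obtain ⟨c, hc, hsub⟩ := hh.exists_isCycle_of_le (k := q) hT hq (by omega)
  exact hfree ⟨c, hc, hsub.trans <| hrange ▸ hu.2.1 ▸ pathSegment_subset_range u _ _⟩

theorem IsHamPathOn.hasHamPath_jump (hu : IsHamPathOn T S u) (hq : 2 ≤ q)
    (hfar : ∀ i j : Fin l, (j : ℕ) + q ≤ i + 1 → T (u i) (u j)) {v w : Fin l} {x n : ℕ}
    (hv : x + n + q ≤ v + 2) (hw : w + q ≤ x + 1) :
    HasHamPath T ({u v} ∪ pathSegment u x n ∪ {u w}) (n + 2) (u v) (u w) := by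
  have hvw : u v ≠ u w := hu.1.ne fun h => by
    have := Fin.ext_iff.1 h
    omega
  cases n with
  | zero =>
    rw [pathSegment_zero, union_empty]
    exact (HasHamPath.singleton _).append (.singleton _) (disjoint_singleton.2 hvw)
      (hfar _ _ (by omega))
  | succ n =>
    have hmid := hu.hasHamPath_pathSegment (x := x) (n := n) (by omega)
    have hvx : Disjoint {u v} (pathSegment u x (n + 1)) := by
      rw [disjoint_singleton_left, mem_pathSegment hu.1]
      omega
    have hxw : Disjoint ({u v} ∪ pathSegment u x (n + 1)) {u w} := by
      rw [disjoint_singleton_right, mem_union, mem_singleton_iff, mem_pathSegment hu.1]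
      exact not_or.2 ⟨hvw.symm, by omega⟩
    rw [show n + 1 + 2 = 1 + (n + 1) + 1 by omega]
    refine ((HasHamPath.singleton _).append hmid hvx (hfar _ _ ?_)).append (.singleton _) hxw
      (hfar _ _ ?_) <;> dsimp only <;> omega

end FarArcs

section Matchings

variable {X X' Y Y' : Set V} {r r' : ℕ}

theorem HasMatching.mono (h : HasMatching T X Y r) (hX : X ⊆ X') (hY : Y ⊆ Y') :
    HasMatching T X' Y' r :=
  let ⟨e, he, hinj⟩ := h
  ⟨e, fun i => ⟨hX (he i).1, hY (he i).2.1, (he i).2.2⟩, hinj⟩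

theorem HasMatching.exists_injective_s19 (h : HasMatching T X Y r) (hfin : Y.Finite)
    (hY : Y.ncard = r) {K : Type*} {y : K → V} (hy : Function.Injective y) (hyY : ∀ k, y k ∈ Y) :
    ∃ w : K → V, Function.Injective w ∧ ∀ k, w k ∈ X ∧ T (w k) (y k) := by
  obtain ⟨e, he, hinj⟩ := h
  have hfst : Function.Injective fun i => (e i).1 := fun i j hij =>
    by_contra fun hne => (hinj i j hne).1 hij
  have hsnd : Function.Injective fun i => (e i).2 := fun i j hij =>
    by_contra fun hne => (hinj i j hne).2 hij
  have hrange : range (fun i => (e i).2) = Y := by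
    refine eq_of_subset_of_ncard_le (range_subset_iff.2 fun i => (he i).2.1) ?_ hfin
    rw [ncard_range_of_injective hsnd, Nat.card_fin, hY]
  choose i hi using fun k => hrange.superset (hyY k)
  have hiinj : Function.Injective i := fun k k' hk => hy (by rw [← hi k, ← hi k', hk])
  exact ⟨fun k => (e (i k)).1, hfst.comp hiinj, fun k => ⟨(he _).1, hi k ▸ (he _).2.2⟩⟩

theorem HasMatching.exists_strictMono_openAt [NeZero q] {c : ZMod q → V}
    (h : HasMatching T (range c) Y (r + 1)) :
    ∃ (p : ZMod q) (x : Fin (r + 1) → Fin q) (v : Fin (r + 1) → V), (x 0 : ℕ) = 0 ∧ StrictMono x ∧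
      Function.Injective v ∧ ∀ k, v k ∈ Y ∧ T (openAt c p (x k)) (v k) := by
  obtain ⟨e, he, hinj⟩ := h
  choose s hs using fun i => (he i).1
  let d : Fin (r + 1) → Fin q := fun i => ⟨(s 0 - s i).val, ZMod.val_lt _⟩
  have hd (i) : openAt c (s 0) (d i) = (e i).1 := by simp [openAt, d, hs]
  have hdinj : Function.Injective d := fun i j hij =>
    by_contra fun hne => (hinj i j hne).1 (by rw [← hd, ← hd, hij])
  have hmono := Tuple.monotone_sort d
  refine ⟨s 0, d ∘ Tuple.sort d, fun k => (e (Tuple.sort d k)).2, ?_,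
    hmono.strictMono_of_injective (hdinj.comp (Tuple.sort d).injective), fun k k' hk => ?_,
    fun k => ⟨(he _).2.1, ?_⟩⟩
  · have hle := hmono (Fin.zero_le ((Tuple.sort d).symm 0))
    simpa [d] using hle
  · exact (Tuple.sort d).injective (by_contra fun hne => (hinj _ _ hne).2 hk)
  · exact (hd _).symm ▸ (he _).2.2

theorem exists_forall_arc_add {G K : Type*} [AddGroup G] [Finite G] {a : G → V}
    (ha : Function.Injective a) (hY : Y.Finite)
    (harcs : Nat.card G * Y.ncard < arcs T (range a) Y + Nat.card G) (x : K → G) {y : K → V}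
    (hy : Function.Injective y) (hyY : ∀ k, y k ∈ Y) : ∃ r, ∀ k, T (a (r + x k)) (y k) := by
  by_contra! hbad
  choose k hk using hbad
  -- The non-arcs obtained from distinct shifts are distinct: the head determines `k r`.
  let f : G → V × V := fun r => (a (r + x (k r)), y (k r))
  have hf : Function.Injective f := fun r r' h => by
    obtain ⟨h₁, h₂⟩ := Prod.ext_iff.1 h
    have h₁ := ha h₁
    rwa [hy h₂, add_left_inj] at h₁
  have hdisj : Disjoint {p : V × V | p.1 ∈ range a ∧ p.2 ∈ Y ∧ T p.1 p.2} (range f) :=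
    disjoint_right.2 fun _ ⟨r, hr⟩ hp => hk r (by simpa [← hr, f] using hp.2.2)
  have hfin : (range a ×ˢ Y).Finite := (finite_range a).prod hY
  have harcsub : {p : V × V | p.1 ∈ range a ∧ p.2 ∈ Y ∧ T p.1 p.2} ⊆ range a ×ˢ Y :=
    fun _ hp => ⟨hp.1, hp.2.1⟩
  have hle := ncard_le_ncard (union_subset harcsub (range_subset_iff.2 fun r =>
    show f r ∈ range a ×ˢ Y from ⟨mem_range_self _, hyY _⟩)) hfin
  rw [ncard_union_eq hdisj (hfin.subset harcsub) (finite_range f), ncard_range_of_injective hf,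
    ncard_prod, ncard_range_of_injective ha] at hle
  exact hle.not_gt harcs

end Matchings

section Lengths

theorem sum_Iio_add_le_sum_Iio {ι : Type*} [LinearOrder ι] [LocallyFiniteOrderBot ι] (f : ι → ℕ)
    {k k' : ι} (h : k < k') :
    ∑ j ∈ Finset.Iio k, f j + f k ≤ ∑ j ∈ Finset.Iio k', f j := by
  rw [Finset.sum_Iio_add_eq_sum_Iic]
  exact Finset.sum_le_sum_of_subset fun _ hj =>
    Finset.mem_Iio.2 ((Finset.mem_Iic.1 hj).trans_lt h)

theorem sum_Iio_add_le_sum_univ {ι : Type*} [LinearOrder ι] [LocallyFiniteOrderBot ι] [Fintype ι]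
    (f : ι → ℕ) (k : ι) : ∑ j ∈ Finset.Iio k, f j + f k ≤ ∑ j, f j := by
  rw [Finset.sum_Iio_add_eq_sum_Iic]
  exact Finset.sum_le_sum_of_subset (Finset.subset_univ _)

-- Cycle `k` will take `μ k + 2` vertices from the path, `α k + 1` from the first cycle, and
-- `β k + 1` from the second, which it leaves at `x k`.
theorem exists_segment_lengths (hq : 5 ≤ q) {x : Fin 3 → Fin q} (hx : StrictMono x)
    (hx0 : (x 0 : ℕ) = 0) : ∃ α β μ : Fin 3 → ℕ, (∀ k, μ k + 2 + (α k + 1) + (β k + 1) = q) ∧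
      (∀ k k', k < k' → x k + (β k + 1) ≤ x k') ∧ (∀ k, x k + β k < q) ∧
      ∑ k, (α k + 1) ≤ q ∧ ∑ k, μ k + 5 ≤ q := by
  have h01 : (x 0 : ℕ) < x 1 := hx (by decide)
  have h12 : (x 1 : ℕ) < x 2 := hx (by decide)
  obtain ⟨b₀, b₁, b₂, hb₀, hb₁, hb₂, hb₀', hb₁', hb₂', hb⟩ : ∃ b₀ b₁ b₂ : ℕ,
      b₀ < x 1 ∧ x 1 + b₁ < x 2 ∧ x 2 + b₂ < q ∧ b₀ + 4 ≤ q ∧ b₁ + 4 ≤ q ∧ b₂ + 4 ≤ q ∧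
        q ≤ b₀ + b₁ + b₂ + 4 :=
    ⟨min (x 1 - 1) (q - 4), min (x 2 - x 1 - 1) (q - 4), min (q - x 2 - 1) (q - 4), by omega⟩
  obtain ⟨a₀, ha₀⟩ : ∃ a₀, a₀ = min (q - 4 - b₀) (q - 3) := ⟨_, rfl⟩
  obtain ⟨a₁, ha₁⟩ : ∃ a₁, a₁ = min (q - 4 - b₁) (q - 3 - a₀) := ⟨_, rfl⟩
  obtain ⟨a₂, ha₂⟩ : ∃ a₂, a₂ = min (q - 4 - b₂) (q - 3 - a₀ - a₁) := ⟨_, rfl⟩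
  refine ⟨![a₀, a₁, a₂], ![b₀, b₁, b₂],
    ![q - 4 - a₀ - b₀, q - 4 - a₁ - b₁, q - 4 - a₂ - b₂], ?_⟩
  simp only [Fin.forall_fin_succ, Fin.sum_univ_three, Fin.succ_zero_eq_one, Fin.succ_one_eq_two,
    Matrix.cons_val, IsEmpty.forall_iff, Fin.reduceLT, forall_const, and_true, true_and]
  omega

end Lengths

section DisjointFamilies

open Function

variable {ι : Type*}

theorem pairwise_disjoint_union {X Y : Set V} {A B : ι → Set V} (hXY : Disjoint X Y)
    (hAX : ∀ k, A k ⊆ X) (hBY : ∀ k, B k ⊆ Y) (hA : Pairwise (Disjoint on A))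
    (hB : Pairwise (Disjoint on B)) : Pairwise (Disjoint on fun k => A k ∪ B k) :=
  fun k k' hk => disjoint_union_left.2
    ⟨disjoint_union_right.2 ⟨hA hk, hXY.mono (hAX k) (hBY k')⟩,
      disjoint_union_right.2 ⟨(hXY.mono (hAX k') (hBY k)).symm, hB hk⟩⟩

theorem exists_disjoint_isCycle_of_three_paths {X Y Z : Set V} {A B C : ι → Set V}
    {n₁ n₂ n₃ : ι → ℕ} {x₁ x₂ x₃ y₁ y₂ y₃ : ι → V} (hXY : Disjoint X Y) (hXZ : Disjoint X Z)
    (hYZ : Disjoint Y Z) (hAX : ∀ k, A k ⊆ X) (hBY : ∀ k, B k ⊆ Y) (hCZ : ∀ k, C k ⊆ Z)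
    (hA : Pairwise (Disjoint on A)) (hB : Pairwise (Disjoint on B)) (hC : Pairwise (Disjoint on C))
    (h₁ : ∀ k, HasHamPath T (A k) (n₁ k) (x₁ k) (y₁ k))
    (h₂ : ∀ k, HasHamPath T (B k) (n₂ k) (x₂ k) (y₂ k))
    (h₃ : ∀ k, HasHamPath T (C k) (n₃ k) (x₃ k) (y₃ k)) (h₁₂ : ∀ k, T (y₁ k) (x₂ k))
    (h₂₃ : ∀ k, T (y₂ k) (x₃ k)) (h₃₁ : ∀ k, T (y₃ k) (x₁ k)) (hq : ∀ k, n₁ k + n₂ k + n₃ k = q) :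
    ∃ c : ι → ZMod q → V, (∀ k, IsCycle T q (c k)) ∧
      Pairwise (Disjoint on fun k => range (c k)) ∧ ∀ k, range (c k) ⊆ X ∪ Y ∪ Z := by
  have hXYZ : Disjoint (X ∪ Y) Z := disjoint_union_left.2 ⟨hXZ, hYZ⟩
  have hABX (k) : A k ∪ B k ⊆ X ∪ Y := union_subset_union (hAX k) (hBY k)
  have hcyc (k) : ∃ c : ZMod q → V, IsCycle T q c ∧ range c = A k ∪ B k ∪ C k :=
    hq k ▸ (((h₁ k).append (h₂ k) (hXY.mono (hAX k) (hBY k)) (h₁₂ k)).append (h₃ k)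
      (hXYZ.mono (hABX k) (hCZ k)) (h₂₃ k)).exists_isCycle (h₃₁ k)
  choose c hc hrange using hcyc
  refine ⟨c, hc, ?_, fun k => (hrange k).subset.trans (union_subset_union (hABX k) (hCZ k))⟩
  rw [funext hrange]
  exact pairwise_disjoint_union hXYZ hABX hCZ (pairwise_disjoint_union hXY hAX hBY hA hB) hC

variable [LinearOrder ι] {l : ℕ} {u : Fin l → V} {x n : ι → ℕ}

theorem pairwise_disjoint_pathSegment (hu : Injective u) (h : ∀ k k', k < k' → x k + n k ≤ x k') :
    Pairwise (Disjoint on fun k => pathSegment u (x k) (n k)) :=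
  (pairwise_disjoint_on _).2 fun k k' hk => disjoint_pathSegment hu (h k k' hk)

theorem injective_segment_end (hu : Injective u) (h : ∀ k k', k < k' → x k + (n k + 1) ≤ x k')
    (hl : ∀ k, x k + n k < l) : Injective fun k => u ⟨x k + n k, hl k⟩ := by
  have hmono : StrictMono fun k => x k + n k := fun k k' hk =>
    (h k k' hk).trans (Nat.le_add_right _ _)
  exact hu.comp fun k k' hk => hmono.injective (Fin.ext_iff.1 hk)

theorem pairwise_disjoint_jump (hu : Injective u) (h : ∀ k k', k < k' → x k + n k ≤ x k')
    {v w : ι → Fin l} (hv : Injective v) (hw : Injective w) (hvx : ∀ k k', x k + n k ≤ v k')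
    (hwx : ∀ k k', w k < x k') :
    Pairwise (Disjoint on fun k => {u (v k)} ∪ pathSegment u (x k) (n k) ∪ {u (w k)}) := by
  refine (pairwise_disjoint_on _).2 fun k k' hk => ?_
  have hvw (k k') : u (v k) ≠ u (w k') := hu.ne fun h => by
    have := hvx k k
    have := hwx k' k
    have := Fin.ext_iff.1 h
    omega
  have hvn (k k') : u (v k) ∉ pathSegment u (x k') (n k') := fun h =>
    (hvx k' k).not_gt ((mem_pathSegment hu).1 h).2
  have hwn (k k') : u (w k) ∉ pathSegment u (x k') (n k') := fun h =>
    (hwx k k').not_ge ((mem_pathSegment hu).1 h).1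
  have hvv := (hu.comp hv).ne hk.ne
  have hww := (hu.comp hw).ne hk.ne
  simp_all [disjoint_pathSegment hu (h k k' hk), eq_comm]

theorem IsHamPathOn.exists_disjoint_jumps [LocallyFiniteOrderBot ι] [Fintype ι] {S : Set V}
    (hu : IsHamPathOn T S u) (hq : 2 ≤ q)
    (hfar : ∀ i j : Fin l, (j : ℕ) + q ≤ i + 1 → T (u i) (u j)) {v w : ι → V}
    (hv : Injective v) (hvu : ∀ k, v k ∈ u '' {i | 4 * q - 8 ≤ (i : ℕ)}) (hw : Injective w)
    (hwu : ∀ k, w k ∈ u '' {i | (i : ℕ) < q + 1}) (hn : ∑ k, n k + 5 ≤ q) :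
    ∃ U : ι → Set V, (∀ k, U k ⊆ S) ∧ Pairwise (Disjoint on U) ∧
      ∀ k, HasHamPath T (U k) (n k + 2) (v k) (w k) := by
  choose i hi hiv using hvu
  choose j hj hjw using hwu
  obtain rfl : (fun k => u (i k)) = v := funext hiv
  obtain rfl : (fun k => u (j k)) = w := funext hjw
  simp only [mem_ofPred_eq] at hi hj
  -- `2 * q - 1` is the first index from which there is an arc to every possible `u (j k)`.
  let x : ι → ℕ := fun k => 2 * q - 1 + ∑ j ∈ Finset.Iio k, n j
  have hxn (k) : x k + n k + 6 ≤ 3 * q := by grind [sum_Iio_add_le_sum_univ n k]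
  have hxx (k k') (h : k < k') : x k + n k ≤ x k' := by grind [sum_Iio_add_le_sum_Iio n h]
  refine ⟨fun k => {u (i k)} ∪ pathSegment u (x k) (n k) ∪ {u (j k)}, fun k => ?_,
    pairwise_disjoint_jump hu.1 hxx (.of_comp hv) (.of_comp hw) (fun k k' => ?_)
    (fun k k' => ?_), fun k => hu.hasHamPath_jump hq hfar ?_ ?_⟩
  · rw [← hu.2.1]
    exact union_subset (union_subset (singleton_subset_iff.2 (mem_range_self _))
      (pathSegment_subset_range u _ _)) (singleton_subset_iff.2 (mem_range_self _))
  all_goals grind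

theorem exists_three_disjoint_isCycle (hq : 5 ≤ q) {S : Set V} (hu : IsHamPathOn T S u)
    (hfar : ∀ i j : Fin l, (j : ℕ) + q ≤ i + 1 → T (u i) (u j)) {a b : ZMod q → V}
    (ha : IsCycle T q a) (hb : IsCycle T q b) (hSa : Disjoint S (range a))
    (hSb : Disjoint S (range b)) (hab : Disjoint (range a) (range b))
    (hm1 : HasMatching T (u '' {i | (i : ℕ) < q + 1}) (range a) q)
    (hm2 : HasMatching T (range b) (u '' {i | 4 * q - 8 ≤ (i : ℕ)}) 3)
    (harcs : q ^ 2 - q < arcs T (range a) (range b)) :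
    ∃ c : Fin 3 → ZMod q → V, (∀ k, IsCycle T q (c k)) ∧
      Pairwise (Disjoint on fun k => range (c k)) ∧ ∀ k, range (c k) ⊆ S ∪ range a ∪ range b := by
  have : NeZero q := ⟨by omega⟩
  obtain ⟨p, y, v, hy0, hy, hv, hyv⟩ := hm2.exists_strictMono_openAt
  obtain ⟨α, β, μ, hlen, hβ, hβq, hα, hμ⟩ := exists_segment_lengths hq hy hy0
  let x : Fin 3 → ℕ := fun k => ∑ j ∈ Finset.Iio k, (α j + 1)
  have hx (k) : x k + α k < q := by grind [sum_Iio_add_le_sum_univ (fun j => α j + 1) k]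
  have hxx (k k') (h : k < k') : x k + (α k + 1) ≤ x k' := sum_Iio_add_le_sum_Iio _ h
  have hfew :
      Nat.card (ZMod q) * (range b).ncard < arcs T (range a) (range b) + Nat.card (ZMod q) := by
    rw [hb.ncard_range, Nat.card_zmod, ← sq]
    omega
  have hainj (r) := (ha.isHamPathOn_openAt r).1
  have hbinj := (hb.isHamPathOn_openAt p).1
  obtain ⟨r, hr⟩ := exists_forall_arc_add ha.1 (finite_range b) hfew (fun k => -(x k : ZMod q))
    (injective_segment_end hbinj hβ hβq) fun k => mem_range_self _
  obtain ⟨w, hw, hws⟩ := hm1.exists_injective_s19 (finite_range a) ha.ncard_range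
    (injective_segment_end (hainj r) hxx hx) fun k => mem_range_self _
  obtain ⟨U, hUS, hU, hpath⟩ := hu.exists_disjoint_jumps (by omega) hfar hv (fun k => (hyv k).1) hw
    (fun k => (hws k).1) hμ
  refine exists_disjoint_isCycle_of_three_paths hSa hSb hab hUS (fun k => ?_) (fun k => ?_) hU
    (pairwise_disjoint_pathSegment (hainj r) hxx) (pairwise_disjoint_pathSegment hbinj hβ) hpath
    (fun k => (ha.isHamPathOn_openAt r).hasHamPath_pathSegment (hx k))
    (fun k => (hb.isHamPathOn_openAt p).hasHamPath_pathSegment (hβq k)) (fun k => (hws k).2)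
    (fun k => ?_) (fun k => (hyv k).2) hlen
  · exact range_openAt a r ▸ pathSegment_subset_range _ _ _
  · exact range_openAt b p ▸ pathSegment_subset_range _ _ _
  · simpa [openAt, sub_eq_add_neg] using hr k

end DisjointFamilies

section Exchange

open Function

theorem hasDisjointCycles_card {ι : Type*} [Fintype ι] {c : ι → ZMod q → V}
    (hc : ∀ k, IsCycle T q (c k)) (hdisj : Pairwise (Disjoint on fun k => range (c k))) :
    HasDisjointCycles T (Fintype.card ι) q :=
  ⟨c ∘ (Fintype.equivFin ι).symm, fun _ => hc _,
    fun _ _ hj => hdisj ((Fintype.equivFin ι).symm.injective.ne hj)⟩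

theorem DisjointCycles.hasDisjointCycles_exchange {n m : ℕ} {C : Fin n → ZMod q → V}
    (hCdisj : DisjointCycles C) (hC : ∀ j, IsCycle T q (C j)) (J : Finset (Fin n))
    {c : Fin m → ZMod q → V} (hc : ∀ k, IsCycle T q (c k))
    (hcdisj : Pairwise (Disjoint on fun k => range (c k)))
    (hcJ : ∀ k, ∀ j ∉ J, Disjoint (range (c k)) (range (C j))) :
    HasDisjointCycles T (n - J.card + m) q := by
  have hcard : Fintype.card ({j // j ∉ J} ⊕ Fin m) = n - J.card + m := by
    simp [Fintype.card_subtype_compl]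
  rw [← hcard]
  refine hasDisjointCycles_card (c := Sum.elim (fun j => C j) c) (Sum.rec (fun j => hC j) hc) ?_
  rintro (j | k) (j' | k') h
  · exact hCdisj j j' fun hj => h (congrArg Sum.inl (Subtype.ext hj))
  · exact (hcJ k' j j.2).symm
  · exact hcJ k j' j'.2
  · exact hcdisj fun hk => h (congrArg Sum.inr hk)

end Exchange

end Development

theorem stmt19_general {V : Type*} {T : V → V → Prop} (hT : IsTournament T) {q n : ℕ} (hq : 5 ≤ q)
    {C : Fin n → ZMod q → V} (hC : ∀ j, IsCycle T q (C j)) (hdisj : DisjointCycles C) {S : Set V}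
    (hS : S ⊆ (⋃ j, range (C j))ᶜ) (hfree : ¬ ∃ c : ZMod q → V, IsCycle T q c ∧ range c ⊆ S)
    {l : ℕ} {u : Fin l → V} (hP : IsHamPathOn T S u) {i₀ j₀ : Fin n} (hij : i₀ ≠ j₀)
    (hm1 : HasMatching T (u '' {i : Fin l | (i : ℕ) < q + 1}) (range (C i₀)) q)
    (hm2 : HasMatching T (range (C j₀)) (u '' {i : Fin l | 4 * q - 8 ≤ (i : ℕ)}) 3)
    (harcs : q ^ 2 - q < arcs T (range (C i₀)) (range (C j₀))) :
    HasDisjointCycles T (n + 1) q := by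
  have hSC (j) : Disjoint S (range (C j)) :=
    (disjoint_compl_left_iff_subset.2 (subset_iUnion (fun j => range (C j)) j)).mono_left hS
  obtain ⟨c, hc, hcdisj, hsub⟩ := exists_three_disjoint_isCycle hq hP
    (hP.arc_of_add_le hT (by omega) hfree) (hC i₀) (hC j₀) (hSC i₀) (hSC j₀) (hdisj i₀ j₀ hij)
    hm1 hm2 harcs
  have havoid (k) (j) (hj : j ∉ ({i₀, j₀} : Finset (Fin n))) :
      Disjoint (range (c k)) (range (C j)) := by
    simp only [Finset.mem_insert, Finset.mem_singleton, not_or] at hj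
    refine .mono_left (hsub k) ?_
    exact ((hSC j).union_left (hdisj _ _ (Ne.symm hj.1))).union_left (hdisj _ _ (Ne.symm hj.2))
  have hn : ({i₀, j₀} : Finset (Fin n)).card ≤ n := card_finset_fin_le _
  have hexchange := hdisj.hasDisjointCycles_exchange hC {i₀, j₀} hc hcdisj havoid
  rw [Finset.card_pair hij] at hn hexchange
  rwa [show n + 1 = n - 2 + 3 by omega]

theorem stmt19 {V : Type*} [Fintype V] (T : V → V → Prop) (hT : IsTournament T)
    (q n : ℕ) (hq : 10 ≤ q)
    (C : Fin n → ZMod q → V) (hC : ∀ j, IsCycle T q (C j)) (hdisj : DisjointCycles C)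
    (hfree : ¬ ∃ c : ZMod q → V, IsCycle T q c ∧
      Set.range c ⊆ (⋃ j, Set.range (C j))ᶜ)
    (l : ℕ) (hl : 4 * q - 5 ≤ l) (u : Fin l → V)
    (hP : IsHamPathOn T ((⋃ j, Set.range (C j))ᶜ) u)
    (i₀ j₀ : Fin n) (hij : i₀ ≠ j₀)
    (hm1 : HasMatching T (u '' {i : Fin l | (i : ℕ) < q + 1}) (Set.range (C i₀)) q)
    (hm2 : HasMatching T (Set.range (C j₀)) (u '' {i : Fin l | 4 * q - 5 ≤ (i : ℕ)}) 3)
    (harcs : q ^ 2 - q + 3 ≤ arcs T (Set.range (C i₀)) (Set.range (C j₀))) :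
    HasDisjointCycles T (n + 1) q :=
  stmt19_general hT (by omega) hC hdisj subset_rfl hfree hP hij hm1
    (hm2.mono subset_rfl (image_mono fun _ => (Nat.sub_le_sub_left (by norm_num) _).trans))
    (by omega)
end
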